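/- Let A, B ∈ ℝ^{p×p} be symmetric with B positive definite and A positive semidefinite, and let 0 < q_1 < ... < q_d < p be a signature. Define f(ρ) = Σ_{k=1}^d Σ_{j=1}^{q_k} λ_j(A − ρB), where λ_1(M) ≥ ... ≥ λ_p(M) are the decreasingly sorted eigenvalues of a symmetric matrix M. Then f admits a unique root: there exists exactly one ρ* ∈ ℝ such that f(ρ*) = 0. -/

import Mathlib

open Matrix Finset

/-- `μ` is the decreasingly sorted spectrum of the (symmetric) matrix `M`:
`μ 0 ≥ μ 1 ≥ ⋯ ≥ μ (p-1)` and `M = V diag(μ) Vᵀ` for some orthogonal `V`. -/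
def IsSortedSpectrum {p : ℕ} (M : Matrix (Fin p) (Fin p) ℝ) (μ : Fin p → ℝ) : Prop :=
  (∀ i j : Fin p, i ≤ j → μ j ≤ μ i) ∧
  ∃ V : Matrix (Fin p) (Fin p) ℝ, Vᵀ * V = 1 ∧ M = V * Matrix.diagonal μ * Vᵀ

/-!
Counting how often each eigenvalue occurs turns the double sum into `∑ j, w j * λ_j(A - ρ B)` with
antitone nonnegative weights `w`. By the variational principle of Ky Fan and von Neumann this is the
maximum over orthogonal `V` of `∑ j, w j * (Vᵀ (A - ρ B) V) j j = a V - ρ * b V`, where `b V > 0`.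
Such a maximum is zero exactly when `ρ` is the maximum of the trace ratio `a V / b V`, which is
attained because the orthogonal group is compact, and is unique.
-/

theorem isGreatest_range_sub_mul_iff_div {ι K : Type*} [Field K] [LinearOrder K]
    [IsStrictOrderedRing K] {a b : ι → K} (hb : ∀ i, 0 < b i) {r : K} :
    IsGreatest (Set.range fun i => a i - r * b i) 0 ↔
      IsGreatest (Set.range fun i => a i / b i) r := by
  simp only [IsGreatest, mem_upperBounds, Set.forall_mem_range, sub_nonpos, div_le_iff₀ (hb _)]
  simp only [Set.mem_range, sub_eq_zero, div_eq_iff (hb _).ne']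

theorem dotProduct_mulVec_le_of_monovary {n K : Type*} [Fintype n] [DecidableEq n] [Field K]
    [LinearOrder K] [IsStrictOrderedRing K] {w μ : n → K} (h : Monovary w μ) {D : Matrix n n K}
    (hD : D ∈ doublyStochastic K n) : w ⬝ᵥ D *ᵥ μ ≤ w ⬝ᵥ μ := by
  obtain ⟨c, hc_nonneg, hc_sum, rfl⟩ := exists_eq_sum_perm_of_mem_doublyStochastic hD
  have rearrangement (σ : Equiv.Perm n) : w ⬝ᵥ σ.permMatrix K *ᵥ μ ≤ w ⬝ᵥ μ := by
    rw [permMatrix_mulVec]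
    exact h.sum_mul_comp_perm_le_sum_mul
  calc w ⬝ᵥ (∑ σ, c σ • σ.permMatrix K) *ᵥ μ
      = ∑ σ, c σ * (w ⬝ᵥ σ.permMatrix K *ᵥ μ) := by
        simp only [sum_mulVec, dotProduct_sum, smul_mulVec, dotProduct_smul, smul_eq_mul]
    _ ≤ ∑ σ, c σ * (w ⬝ᵥ μ) := by
        gcongr with σ
        exacts [hc_nonneg σ, rearrangement σ]
    _ = w ⬝ᵥ μ := by rw [← Finset.sum_mul, hc_sum, one_mul]

theorem hadamard_self_mem_doublyStochastic {n R : Type*} [Fintype n] [DecidableEq n] [CommRing R]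
    [LinearOrder R] [IsStrictOrderedRing R] {Q : Matrix n n R} (hQ : Q ∈ orthogonalGroup n R) :
    Q ⊙ Q ∈ doublyStochastic R n := by
  refine mem_doublyStochastic_iff_sum.2 ⟨fun i j => mul_self_nonneg _, fun i => ?_, fun j => ?_⟩
  · simpa [mul_apply] using congr_fun₂ ((mem_orthogonalGroup_iff _ _).1 hQ) i i
  · simpa [mul_apply] using congr_fun₂ ((mem_orthogonalGroup_iff' _ _).1 hQ) j j

theorem isUnit_of_mem_orthogonalGroup {n R : Type*} [Fintype n] [DecidableEq n] [CommRing R]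
    {V : Matrix n n R} (hV : V ∈ orthogonalGroup n R) : IsUnit V :=
  .of_mul_eq_one _ ((mem_orthogonalGroup_iff _ _).1 hV)

theorem isCompact_unitaryGroup (n 𝕜 : Type*) [Fintype n] [DecidableEq n] [RCLike 𝕜] :
    IsCompact (unitaryGroup n 𝕜 : Set (Matrix n n 𝕜)) := by
  have closed : IsClosed (unitaryGroup n 𝕜 : Set (Matrix n n 𝕜)) := isClosed_unitary
  have compact_box : IsCompact
      (Set.univ.pi fun _ => Set.univ.pi fun _ => Metric.closedBall 0 1 : Set (Matrix n n 𝕜)) :=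
    isCompact_univ_pi fun _ => isCompact_univ_pi fun _ => isCompact_closedBall 0 1
  refine compact_box.of_isClosed_subset closed fun U hU i _ j _ => ?_
  exact mem_closedBall_zero_iff.2 (entry_norm_bound_of_unitary hU i j)

section WeightedTrace

variable {n R : Type*} [Fintype n] [CommRing R]

/-- The weighted trace `∑ j, w j * (Vᵀ M V) j j` of `M` in the frame formed by the columns of `V`.
For orthogonal `V` it is the objective whose maximum is the weighted sum of the eigenvalues of
`M`. -/
def weightedTrace (w : n → R) (V M : Matrix n n R) : R :=
  w ⬝ᵥ (Vᵀ * M * V).diag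

theorem weightedTrace_sub_smul (w : n → R) (V A B : Matrix n n R) (r : R) :
    weightedTrace w V (A - r • B) = weightedTrace w V A - r * weightedTrace w V B := by
  simp only [weightedTrace, Matrix.mul_sub, Matrix.sub_mul, Matrix.mul_smul, Matrix.smul_mul,
    diag_sub, diag_smul, dotProduct_sub, dotProduct_smul, smul_eq_mul]

theorem weightedTrace_mul_diagonal_mul_transpose [DecidableEq n] (w μ : n → R)
    (V W : Matrix n n R) :
    weightedTrace w V (W * diagonal μ * Wᵀ) = w ⬝ᵥ ((Vᵀ * W) ⊙ (Vᵀ * W)) *ᵥ μ := by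
  have regroup : Vᵀ * (W * diagonal μ * Wᵀ) * V = Vᵀ * W * diagonal μ * (Vᵀ * W)ᵀ := by
    simp only [transpose_mul, transpose_transpose, Matrix.mul_assoc]
  rw [weightedTrace, regroup]
  congr 1
  ext j
  rw [diag_apply, mul_apply]
  simp only [mul_diagonal, transpose_apply, mulVec, dotProduct, hadamard_apply]
  exact Finset.sum_congr rfl fun i _ => by ring

theorem weightedTrace_pos [DecidableEq n] {w : n → ℝ} (hw : 0 < w) {V B : Matrix n n ℝ}
    (hV : IsUnit V) (hB : B.PosDef) : 0 < weightedTrace w V B := by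
  have hVBV : (Vᵀ * B * V).PosDef := hB.conjTranspose_mul_mul_same (mulVec_injective_of_isUnit hV)
  obtain ⟨hw_nonneg, i, hi⟩ := Pi.lt_def.1 hw
  exact Finset.sum_pos' (fun j _ => mul_nonneg (hw_nonneg j) hVBV.diag_pos.le)
    ⟨i, mem_univ i, mul_pos hi hVBV.diag_pos⟩

theorem exists_isGreatest_weightedTrace_div [DecidableEq n] {w : n → ℝ} (hw : 0 < w)
    (A : Matrix n n ℝ) {B : Matrix n n ℝ} (hB : B.PosDef) :
    ∃ ρ, IsGreatest (Set.range fun V : orthogonalGroup n ℝ =>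
      weightedTrace w V A / weightedTrace w V B) ρ := by
  have : CompactSpace (orthogonalGroup n ℝ) :=
    isCompact_iff_compactSpace.1 (isCompact_unitaryGroup n ℝ)
  have continuous_weightedTrace (M : Matrix n n ℝ) :
      Continuous fun V : orthogonalGroup n ℝ => weightedTrace w V M := by
    unfold weightedTrace
    fun_prop
  refine (isCompact_range ?_).exists_isGreatest (Set.range_nonempty _)
  exact (continuous_weightedTrace A).div (continuous_weightedTrace B) fun V =>
    (weightedTrace_pos hw (isUnit_of_mem_orthogonalGroup V.2) hB).ne'

end WeightedTrace

theorem exists_isSortedSpectrum {p : ℕ} {M : Matrix (Fin p) (Fin p) ℝ} (hM : M.IsHermitian) :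
    ∃ μ, IsSortedSpectrum M μ := by
  let U : Matrix (Fin p) (Fin p) ℝ := hM.eigenvectorUnitary
  have hU : Uᵀ * U = 1 := (mem_orthogonalGroup_iff' _ _).1 hM.eigenvectorUnitary.2
  have spectral : M = U * diagonal hM.eigenvalues * Uᵀ := hM.spectral_theorem
  let σ : Equiv.Perm (Fin p) := Tuple.sort (OrderDual.toDual ∘ hM.eigenvalues)
  have sorted : Antitone (hM.eigenvalues ∘ σ) :=
    Tuple.monotone_sort (OrderDual.toDual ∘ hM.eigenvalues)
  refine ⟨hM.eigenvalues ∘ σ, fun i j hij => sorted hij, U.submatrix id σ, ?_, ?_⟩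
  · rw [transpose_submatrix, ← submatrix_mul _ _ _ _ _ Function.bijective_id, hU,
      submatrix_one_equiv]
  · rw [← submatrix_diagonal_equiv, transpose_submatrix, ← submatrix_mul _ _ _ _ _ σ.bijective,
      ← submatrix_mul _ _ _ _ _ σ.bijective, ← spectral, submatrix_id_id]

theorem IsSortedSpectrum.isGreatest_weightedTrace {p : ℕ} {M : Matrix (Fin p) (Fin p) ℝ}
    {w μ : Fin p → ℝ} (hw : Antitone w) (hμ : IsSortedSpectrum M μ) :
    IsGreatest (Set.range fun V : orthogonalGroup (Fin p) ℝ => weightedTrace w V M) (w ⬝ᵥ μ) := by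
  obtain ⟨μ_antitone, W, hW, rfl⟩ := hμ
  have hW' : W ∈ orthogonalGroup (Fin p) ℝ := (mem_orthogonalGroup_iff' _ _).2 hW
  simp only [weightedTrace_mul_diagonal_mul_transpose]
  refine ⟨⟨⟨W, hW'⟩, ?_⟩, ?_⟩
  · simp only [hW, hadamard_one, diag_one, Pi.one_def, diagonal_one, one_mulVec]
  · rintro _ ⟨V, rfl⟩
    have hQ : (V : Matrix (Fin p) (Fin p) ℝ)ᵀ * W ∈ orthogonalGroup (Fin p) ℝ :=
      mul_mem (Unitary.star_mem V.2) hW'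
    have hwμ : Monovary w μ := hw.monovary fun i j => μ_antitone i j
    exact dotProduct_mulVec_le_of_monovary hwμ (hadamard_self_mem_doublyStochastic hQ)

theorem forall_isSortedSpectrum_dotProduct_eq_zero_iff {p : ℕ} {w : Fin p → ℝ} (hw : Antitone w)
    (hw_pos : 0 < w) {A B : Matrix (Fin p) (Fin p) ℝ} (hA : A.IsHermitian) (hB : B.PosDef)
    {ρ : ℝ} :
    (∀ μ, IsSortedSpectrum (A - ρ • B) μ → w ⬝ᵥ μ = 0) ↔
      IsGreatest (Set.range fun V : orthogonalGroup (Fin p) ℝ =>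
        weightedTrace w V A / weightedTrace w V B) ρ := by
  have weightedTrace_B_pos (V : orthogonalGroup (Fin p) ℝ) : 0 < weightedTrace w V B :=
    weightedTrace_pos hw_pos (isUnit_of_mem_orthogonalGroup V.2) hB
  have variational {μ : Fin p → ℝ} (hμ : IsSortedSpectrum (A - ρ • B) μ) :
      IsGreatest (Set.range fun V : orthogonalGroup (Fin p) ℝ =>
        weightedTrace w V A - ρ * weightedTrace w V B) (w ⬝ᵥ μ) := by
    simpa only [weightedTrace_sub_smul] using hμ.isGreatest_weightedTrace hw
  rw [← isGreatest_range_sub_mul_iff_div weightedTrace_B_pos]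
  constructor
  · intro root
    obtain ⟨μ, hμ⟩ := exists_isSortedSpectrum (hA.sub (hB.isHermitian.smul (.all ρ)))
    exact root μ hμ ▸ variational hμ
  · exact fun max_eq_zero μ hμ => (variational hμ).unique max_eq_zero

theorem trace_ratio_newton_function_unique_root_general {p : ℕ} {w : Fin p → ℝ} (hw : Antitone w)
    (hw_pos : 0 < w) {A B : Matrix (Fin p) (Fin p) ℝ} (hA : A.IsHermitian) (hB : B.PosDef) :
    ∃! ρ : ℝ, ∀ μ : Fin p → ℝ, IsSortedSpectrum (A - ρ • B) μ → w ⬝ᵥ μ = 0 := by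
  simp only [forall_isSortedSpectrum_dotProduct_eq_zero_iff hw hw_pos hA hB]
  obtain ⟨ρ, hρ⟩ := exists_isGreatest_weightedTrace_div hw_pos A hB
  exact ⟨ρ, hρ, fun _ hr => hr.unique hρ⟩

section SignatureWeight

variable {ι : Type*} (s : Finset ι) (q : ι → ℕ) {p : ℕ}

/-- The multiplicity with which the `j`-th eigenvalue (counted from `0`) occurs in the sum, over
`k ∈ s`, of the `q k` largest eigenvalues. -/
def signatureWeight (j : Fin p) : ℝ :=
  #{k ∈ s | (j : ℕ) < q k}

theorem signatureWeight_antitone : Antitone (signatureWeight s q : Fin p → ℝ) := by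
  intro i j hij
  unfold signatureWeight
  gcongr
  exact hij

variable {s q} in
theorem signatureWeight_pos (hp : 0 < p) {k : ι} (hk : k ∈ s) (hqk : 0 < q k) :
    0 < (signatureWeight s q : Fin p → ℝ) :=
  Pi.lt_def.2 ⟨fun _ => Nat.cast_nonneg _, ⟨0, hp⟩,
    Nat.cast_pos.2 <| card_pos.2 ⟨k, mem_filter.2 ⟨hk, hqk⟩⟩⟩

theorem sum_sum_filter_lt_eq_signatureWeight_dotProduct (μ : Fin p → ℝ) :
    ∑ k ∈ s, ∑ j ∈ univ.filter (fun j : Fin p => (j : ℕ) < q k), μ j =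
      signatureWeight s q ⬝ᵥ μ := by
  simp only [sum_filter]
  rw [sum_comm]
  simp only [← sum_filter, sum_const, nsmul_eq_mul, dotProduct, signatureWeight]

end SignatureWeight

/-- for `B` positive definite and `A` positive semidefinite, the function
`f(ρ) = ∑_{k=1}^d ∑_{j=1}^{q_k} λ_j(A − ρB)` admits a unique root `ρ* ∈ ℝ`. -/
theorem trace_ratio_newton_function_unique_root
    {p d : ℕ} (hd : 1 ≤ d)
    (q : ℕ → ℕ) (hq1 : 0 < q 1)
    (hmono : ∀ k, 1 ≤ k → k < d → q k < q (k + 1)) (hqd : q d < p)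
    (A B : Matrix (Fin p) (Fin p) ℝ)
    (hA : A.PosSemidef) (hB : B.PosDef) :
    ∃! ρ : ℝ, ∀ μ : Fin p → ℝ, IsSortedSpectrum (A - ρ • B) μ →
      ∑ k ∈ Finset.Icc 1 d,
        ∑ j ∈ Finset.univ.filter (fun j : Fin p => (j : ℕ) < q k), μ j = 0 := by
  simp only [sum_sum_filter_lt_eq_signatureWeight_dotProduct]
  exact trace_ratio_newton_function_unique_root_general (signatureWeight_antitone _ q)
    (signatureWeight_pos (Nat.zero_lt_of_lt hqd) (left_mem_Icc.2 hd) hq1) hA.isHermitian hB
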